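/- Let Γ be a digraphon on a probability space (Ω,μ) and let Ω = X₀ ⊔ ⨆_{i∈I} X_i be its decomposition into strong components X_i (i ∈ I) and a fragmented (or null) set X₀. Then ρ(Γ) = sup_{i∈I} ρ(Γ⟦X_i⟧) (with the convention sup ∅ = 0), and if I ≠ ∅ this supremum is attained by some i ∈ I. -/

import Mathlib

open MeasureTheory Filter Set Topology
open scoped ENNReal Real

namespace Digraphon

variable {Ω : Type*} [MeasurableSpace Ω]

/-- `kpowAux μ Γ n` is the `(n+1)`-st kernel power of `Γ`. -/
noncomputable def kpowAux (μ : Measure Ω) (Γ : Ω → Ω → ℝ) : ℕ → Ω → Ω → ℝ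
  | 0 => Γ
  | n + 1 => fun x y => ∫ z, Γ x z * kpowAux μ Γ n z y ∂μ

/-- `dpow μ Γ k` is the `k`-th kernel power of `Γ` (intended for `k ≥ 1`). -/
noncomputable def dpow (μ : Measure Ω) (Γ : Ω → Ω → ℝ) (k : ℕ) : Ω → Ω → ℝ :=
  kpowAux μ Γ (k - 1)

noncomputable def kpowAuxC (μ : Measure Ω) (Γ : Ω → Ω → ℂ) : ℕ → Ω → Ω → ℂ
  | 0 => Γ
  | n + 1 => fun x y => ∫ z, Γ x z * kpowAuxC μ Γ n z y ∂μ

noncomputable def dpowC (μ : Measure Ω) (Γ : Ω → Ω → ℂ) (k : ℕ) : Ω → Ω → ℂ :=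
  kpowAuxC μ Γ (k - 1)

/-- The set of points reachable from `x`. -/
def ReachOut (μ : Measure Ω) (Γ : Ω → Ω → ℝ) (x : Ω) : Set Ω :=
  {z | ∃ k : ℕ, 1 ≤ k ∧ 0 < dpow μ Γ k x z}

/-- The reachability sequence from `x` to `y`. -/
def reachSeq (μ : Measure Ω) (Γ : Ω → Ω → ℝ) (x y : Ω) : Set ℕ :=
  {k : ℕ | 1 ≤ k ∧ 0 < dpow μ Γ k x y}

/-- A digraphon: a measurable kernel with values in `[0,1]`. -/
def IsDigraphon (Γ : Ω → Ω → ℝ) : Prop :=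
  Measurable (Function.uncurry Γ) ∧ ∀ x y, Γ x y ∈ Set.Icc (0 : ℝ) 1

/-- `X` is strongly connected in `Γ`. -/
def StronglyConnectedIn (μ : Measure Ω) (Γ : Ω → Ω → ℝ) (X : Set Ω) : Prop :=
  MeasurableSet X ∧ 0 < μ X ∧
    ∀ A B : Set Ω, MeasurableSet A → MeasurableSet B → A ∪ B = X → Disjoint A B →
      0 < μ A → 0 < μ B → 0 < ∫ x in A, ∫ y in B, Γ x y ∂μ ∂μ

/-- `X` is a strong component in `Γ`. -/
def StrongComponent (μ : Measure Ω) (Γ : Ω → Ω → ℝ) (X : Set Ω) : Prop :=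
  StronglyConnectedIn μ Γ X ∧
    ∀ Y : Set Ω, MeasurableSet Y → 0 < μ (X ∩ Y) → 0 < μ (Y \ X) →
      ¬ StronglyConnectedIn μ Γ Y

/-- `X` is fragmented in `Γ`. -/
def Fragmented (μ : Measure Ω) (Γ : Ω → Ω → ℝ) (X : Set Ω) : Prop :=
  ∀ Y : Set Ω, Y ⊆ X → MeasurableSet Y → ¬ StronglyConnectedIn μ Γ Y

/-- `τ` is an eigenvalue of the integral kernel operator of `Γ` on `L²(Ω;ℂ)`. -/
def IsEigenvalue (μ : Measure Ω) (Γ : Ω → Ω → ℝ) (τ : ℂ) : Prop :=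
  ∃ f : Ω → ℂ, MemLp f 2 μ ∧ ¬(f =ᵐ[μ] 0) ∧
    ∀ᵐ x ∂μ, ∫ y, f y * (Γ y x : ℂ) ∂μ = τ * f x

/-- The spectral radius of `Γ` (`0` if there are no eigenvalues). -/
noncomputable def specRad (μ : Measure Ω) (Γ : Ω → Ω → ℝ) : ℝ :=
  sSup (insert 0 {r : ℝ | ∃ τ : ℂ, IsEigenvalue μ Γ τ ∧ ‖τ‖ = r})

/-- The number of eigenvalues of modulus `specRad μ Γ`. -/
noncomputable def periphMult (μ : Measure Ω) (Γ : Ω → Ω → ℝ) : ℕ :=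
  {τ : ℂ | IsEigenvalue μ Γ τ ∧ ‖τ‖ = specRad μ Γ}.ncard

/-- `P : ZMod d → Set Ω` witnesses graphical `d`-periodicity of `Γ`. -/
def IsPeriodicityWitness (μ : Measure Ω) (Γ : Ω → Ω → ℝ) {d : ℕ} (P : ZMod d → Set Ω) : Prop :=
  (∀ j, MeasurableSet (P j)) ∧ Pairwise (Function.onFun Disjoint P) ∧ (⋃ j, P j) = Set.univ ∧
    ∀ j : ZMod d, (μ.prod μ) {p : Ω × Ω | p.1 ∈ P j ∧ p.2 ∉ P (j + 1) ∧ Γ p.1 p.2 ≠ 0} = 0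

/-- `Γ` is graphically `d`-periodic. -/
def GraphPeriodic (μ : Measure Ω) (Γ : Ω → Ω → ℝ) (d : ℕ) : Prop :=
  ∃ P : ZMod d → Set Ω, IsPeriodicityWitness μ Γ P

/-- `Γ` is aperiodic. -/
def Aperiodic (μ : Measure Ω) (Γ : Ω → Ω → ℝ) : Prop :=
  ∀ d : ℕ, 1 ≤ d → GraphPeriodic μ Γ d → d = 1

/-- `S ⊆ ℕ` is eventually `D`-periodic with shift `s`. -/
def EvPeriodic (D : ℕ) (s : ℤ) (S : Set ℕ) : Prop :=
  (∀ n ∈ S, (D : ℤ) ∣ ((n : ℤ) - s)) ∧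
    ∃ k : ℕ, ∀ n : ℕ, k ≤ n → (((D : ℤ) ∣ ((n : ℤ) - s)) ↔ n ∈ S)

/-- The homomorphism density `t(C_k, Γ)` of the directed `k`-cycle. -/
noncomputable def cycleDensity (μ : Measure Ω) (Γ : Ω → Ω → ℝ) (k : ℕ) : ℝ :=
  ∫ x : Fin k → Ω, ∏ i : Fin k, Γ (x i) (x (finRotate k i)) ∂(Measure.pi fun _ => μ)

/-- `Γ⟦A⟧` : the kernel equal to `Γ` on `A × A` and `0` elsewhere. -/
noncomputable def kerRestrict (Γ : Ω → Ω → ℝ) (A : Set Ω) : Ω → Ω → ℝ :=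
  fun x y => (A ×ˢ A).indicator (Function.uncurry Γ) (x, y)

/-- Equality of sets modulo a `μ`-nullset. -/
def AEEqSet (μ : Measure Ω) (A B : Set Ω) : Prop := μ ((A \ B) ∪ (B \ A)) = 0

/-- The normalized restriction of `μ` to `A`, as a measure on `↥A`. -/
noncomputable def subMeasure (μ : Measure Ω) (A : Set Ω) : Measure ↥A :=
  (μ A)⁻¹ • Measure.comap Subtype.val μ

/-- The restriction of a kernel to `A × A`, as a kernel on `↥A`. -/
def subKernel (Γ : Ω → Ω → ℝ) (A : Set Ω) : ↥A → ↥A → ℝ :=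
  fun a b => Γ ↑a ↑b

/-- A finite oriented graph: no pair of antiparallel edges (in particular no loops). -/
structure OrientedGraph where
  n : ℕ
  E : Finset (Fin n × Fin n)
  no_anti : ∀ e ∈ E, (e.2, e.1) ∉ E

/-- The homomorphism density `t(D, Γ)` of an oriented graph `D`. -/
noncomputable def homDensity (μ : Measure Ω) (Γ : Ω → Ω → ℝ) (D : OrientedGraph) : ℝ :=
  ∫ x : Fin D.n → Ω, ∏ e ∈ D.E, Γ (x e.1) (x e.2) ∂(Measure.pi fun _ => μ)

/-- The cut norm distance of two kernels. -/
noncomputable def cutNormDist (μ : Measure Ω) (U W : Ω → Ω → ℝ) : ℝ :=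
  sSup {r : ℝ | ∃ S T : Set Ω, MeasurableSet S ∧ MeasurableSet T ∧
    r = |∫ x in S, ∫ y in T, (U x y - W x y) ∂μ ∂μ|}

/-- The cut distance of two kernels. -/
noncomputable def cutDist (μ : Measure Ω) (U W : Ω → Ω → ℝ) : ℝ :=
  sInf {r : ℝ | ∃ e : Ω ≃ᵐ Ω, MeasurePreserving e μ μ ∧
    r = cutNormDist μ U (fun x y => W (e x) (e y))}

/-! The operators `T_Γ⟦C⟧` depend continuously on `C` along decreasing sequences of sets, and the
spectral radius is upper semicontinuous, so there is a set `C` that is minimal, up to null sets,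
among those with `ρ(Γ⟦C⟧) = ρ(Γ)`. If `Γ` vanishes on `A × B` for a partition `C = A ⊔ B`, then
`Γ⟦C⟧` is block triangular and `ρ(Γ⟦C⟧) = max (ρ(Γ⟦A⟧)) (ρ(Γ⟦B⟧))`, so by minimality `A` or `B` is
null. If `ρ(Γ) > 0`, then `C` is therefore strongly connected, hence contained in some strong
component `X i` up to a null set, and `ρ(Γ) = ρ(Γ⟦C⟧) ≤ ρ(Γ⟦X i⟧) ≤ ρ(Γ)`. -/

section SpectralRadius

theorem spectralRadius_le_of_norm_pow_le {A : Type*} [NormedRing A] [NormedAlgebra ℂ A]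
    [CompleteSpace A] {a b : A} (h : ∀ n : ℕ, ‖a ^ n‖ ≤ ‖b ^ n‖) :
    spectralRadius ℂ a ≤ spectralRadius ℂ b :=
  le_of_tendsto_of_tendsto' (spectrum.gelfand_formula a) (spectrum.gelfand_formula b) fun n ↦
    ENNReal.rpow_le_rpow (by exact_mod_cast h n) (by positivity)

theorem spectralRadius_ne_top {𝕜 A : Type*} [NormedField 𝕜] [NormedRing A] [NormedAlgebra 𝕜 A]
    [CompleteSpace A] (a : A) : spectralRadius 𝕜 a ≠ ∞ := by
  refine ne_top_of_le_ne_top (ENNReal.coe_ne_top (r := ‖a‖₊ * ‖(1 : A)‖₊)) (iSup₂_le fun k hk ↦ ?_)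
  exact_mod_cast spectrum.norm_le_norm_mul_of_mem hk

theorem upperSemicontinuous_spectralRadius {𝕜 A : Type*} [NormedField 𝕜] [ProperSpace 𝕜]
    [NormedRing A] [NormedAlgebra 𝕜 A] [CompleteSpace A] :
    UpperSemicontinuous (spectralRadius 𝕜 : A → ℝ≥0∞) := by
  intro a y hy
  obtain ⟨r, har, hry⟩ := ENNReal.lt_iff_exists_nnreal_btwn.mp hy
  have hball : spectrum 𝕜 a ⊆ Metric.ball 0 r := fun k hk ↦ by
    have hk' : (‖k‖₊ : ℝ≥0∞) < r := (le_iSup₂_of_le k hk le_rfl).trans_lt har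
    rw [mem_ball_zero_iff]
    exact_mod_cast hk'
  filter_upwards [(upperHemicontinuous_spectrum 𝕜 A).forall_isOpen a _ Metric.isOpen_ball
    hball] with b hb
  refine (iSup₂_le fun k hk ↦ ?_).trans_lt hry
  exact_mod_cast (mem_ball_zero_iff.mp (hb hk)).le

theorem isGreatest_norm_eigenvalues_spectralRadius {E : Type*} [NormedAddCommGroup E]
    [NormedSpace ℂ E] [CompleteSpace E] {T : E →L[ℂ] E} (hT : IsCompactOperator T) :
    IsGreatest (insert 0 {r | ∃ τ, Module.End.HasEigenvalue (T : Module.End ℂ E) τ ∧ ‖τ‖ = r})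
      (spectralRadius ℂ T).toReal := by
  constructor
  · rcases subsingleton_or_nontrivial E with _ | _
    · simp [spectrum.SpectralRadius.of_subsingleton]
    · obtain ⟨τ, hτ, hτT⟩ := spectrum.exists_nnnorm_eq_spectralRadius T
      rcases eq_or_ne τ 0 with rfl | hτ0
      · simp [← hτT]
      · exact .inr ⟨τ, (hT.hasEigenvalue_iff_mem_spectrum hτ0).mpr hτ, by simp [← hτT]⟩
  · rintro r (rfl | ⟨τ, hτ, rfl⟩)
    · exact ENNReal.toReal_nonneg
    · have hmem : τ ∈ spectrum ℂ T := by
        rw [ContinuousLinearMap.spectrum_eq]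
        exact hτ.mem_spectrum
      have hle : (‖τ‖₊ : ℝ≥0∞) ≤ spectralRadius ℂ T := le_iSup₂_of_le τ hmem le_rfl
      simpa using ENNReal.toReal_mono (spectralRadius_ne_top T) hle

end SpectralRadius

theorem isCompactOperator_rankOne {𝕜 E F : Type*} [RCLike 𝕜] [NormedAddCommGroup E]
    [InnerProductSpace 𝕜 E] [NormedAddCommGroup F] [InnerProductSpace 𝕜 F] (x : E) (y : F) :
    IsCompactOperator (InnerProductSpace.rankOne 𝕜 x y) := by
  rw [InnerProductSpace.rankOne_def']
  have hy : IsCompactOperator (innerSL 𝕜 y) := isCompactOperator_of_locallyCompactSpace_dom _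
  exact hy.clm_comp (ContinuousLinearMap.toSpanSingleton 𝕜 x)

section Kernel

variable {α β : Type*} [MeasurableSpace α] [MeasurableSpace β] {μ : Measure α} {ν : Measure β}

theorem memLp_mul_prod {R : Type*} [NormedRing R] [NormMulClass R] {p : ℝ≥0∞} (hp0 : p ≠ 0)
    (hp : p ≠ ∞) {g : α → R} {f : β → R} (hg : MemLp g p μ) (hf : MemLp f p ν) :
    MemLp (fun z : α × β ↦ g z.1 * f z.2) p (μ.prod ν) := by
  have hmeas : AEStronglyMeasurable (fun z : α × β ↦ g z.1 * f z.2) (μ.prod ν) :=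
    hg.1.comp_fst.mul hf.1.comp_snd
  rw [← integrable_norm_rpow_iff hmeas hp0 hp]
  simp only [norm_mul, Real.mul_rpow (norm_nonneg _) (norm_nonneg _)]
  exact (hg.integrable_norm_rpow hp0 hp).mul_prod (hf.integrable_norm_rpow hp0 hp)

variable {𝕜 : Type*} [RCLike 𝕜]

theorem memLp_mul_star_prod (g : Lp 𝕜 2 μ) (f : Lp 𝕜 2 ν) :
    MemLp (fun z : α × β ↦ g z.1 * starRingEnd 𝕜 (f z.2)) 2 (μ.prod ν) :=
  memLp_mul_prod two_ne_zero ENNReal.ofNat_ne_top (Lp.memLp g) (Lp.memLp f).star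

variable [SFinite ν]

section Sections

variable {E : Type*} [NormedAddCommGroup E] {K : α × β → E} {p : ℝ≥0∞}

theorem eLpNorm_eLpNorm_prodMk (hp0 : p ≠ 0) (hp : p ≠ ∞)
    (hK : AEStronglyMeasurable K (μ.prod ν)) :
    eLpNorm (fun x ↦ eLpNorm (fun y ↦ K (x, y)) p ν) p μ = eLpNorm K p (μ.prod ν) := by
  have hp' : p.toReal ≠ 0 := (ENNReal.toReal_pos hp0 hp).ne'
  simp only [eLpNorm_eq_lintegral_rpow_enorm_toReal hp0 hp, enorm_eq_self, ← ENNReal.rpow_mul,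
    one_div_mul_cancel hp', ENNReal.rpow_one]
  rw [lintegral_prod _ (hK.enorm.pow_const _)]

theorem ae_memLp_prodMk [SFinite μ] (hp0 : p ≠ 0) (hp : p ≠ ∞) (hK : MemLp K p (μ.prod ν)) :
    ∀ᵐ x ∂μ, MemLp (fun y ↦ K (x, y)) p ν := by
  filter_upwards [hK.1.prodMk_left, (hK.integrable_norm_rpow hp0 hp).prod_right_ae] with x hx hint
  exact (integrable_norm_rpow_iff hx hp0 hp).mp hint

end Sections

theorem ae_integrable_kernel_mul [SFinite μ] {p q : ℝ≥0∞} [ENNReal.HolderConjugate p q] (hp : p ≠ ∞)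
    {K : α × β → 𝕜} {f : β → 𝕜} (hK : MemLp K p (μ.prod ν)) (hf : MemLp f q ν) :
    ∀ᵐ x ∂μ, Integrable (fun y ↦ K (x, y) * f y) ν := by
  filter_upwards [ae_memLp_prodMk (ENNReal.HolderConjugate.ne_zero p q) hp hK] with x hx
  exact hx.integrable_mul hf

theorem eLpNorm_integral_kernel_mul_le {p q : ℝ≥0∞} [ENNReal.HolderConjugate p q] (hp : p ≠ ∞)
    {K : α × β → 𝕜} {f : β → 𝕜} (hK : AEStronglyMeasurable K (μ.prod ν)) (hf : MemLp f q ν) :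
    eLpNorm (fun x ↦ ∫ y, K (x, y) * f y ∂ν) p μ ≤ eLpNorm f q ν * eLpNorm K p (μ.prod ν) := by
  rw [← eLpNorm_eLpNorm_prodMk (ENNReal.HolderConjugate.ne_zero p q) hp hK,
    ← ENNReal.coe_toNNReal hf.2.ne]
  refine eLpNorm_le_mul_eLpNorm_of_ae_le_mul' ?_ p
  filter_upwards [hK.prodMk_left] with x hx
  have holder : eLpNorm ((fun y ↦ K (x, y)) • f) 1 ν ≤
      eLpNorm (fun y ↦ K (x, y)) p ν * eLpNorm f q ν := eLpNorm_smul_le_mul_eLpNorm hf.1 hx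
  calc ‖∫ y, K (x, y) * f y ∂ν‖ₑ ≤ ∫⁻ y, ‖K (x, y) * f y‖ₑ ∂ν :=
        enorm_integral_le_lintegral_enorm _
    _ = eLpNorm ((fun y ↦ K (x, y)) • f) 1 ν := eLpNorm_one_eq_lintegral_enorm.symm
    _ ≤ _ := by rwa [ENNReal.coe_toNNReal hf.2.ne, enorm_eq_self, mul_comm]

theorem memLp_integral_kernel_mul {p q : ℝ≥0∞} [ENNReal.HolderConjugate p q] (hp : p ≠ ∞)
    {K : α × β → 𝕜} {f : β → 𝕜} (hK : MemLp K p (μ.prod ν)) (hf : MemLp f q ν) :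
    MemLp (fun x ↦ ∫ y, K (x, y) * f y ∂ν) p μ :=
  ⟨(hK.1.mul hf.1.comp_snd).integral_prod_right',
    (eLpNorm_integral_kernel_mul_le hp hK.1 hf).trans_lt (ENNReal.mul_lt_top hf.2 hK.2)⟩

theorem integral_kernel_mul_congr {K L : α × β → 𝕜} {f g : β → 𝕜} (hKL : K =ᵐ[μ.prod ν] L)
    (hfg : f =ᵐ[ν] g) :
    (fun x ↦ ∫ y, K (x, y) * f y ∂ν) =ᵐ[μ] fun x ↦ ∫ y, L (x, y) * g y ∂ν := by
  filter_upwards [Measure.ae_ae_of_ae_prod hKL] with x hx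
  refine integral_congr_ae ?_
  filter_upwards [hx, hfg] with y hKLy hfgy
  rw [hKLy, hfgy]

section HilbertSchmidt

variable [SFinite μ]

/-- The Hilbert–Schmidt operator `f ↦ (x ↦ ∫ y, K (x, y) * f y ∂ν)` with kernel `K`, as a bounded
bilinear map in the kernel `K ∈ L²(μ × ν)` and the function `f ∈ L²(ν)`. -/
noncomputable def kernelOperator :
    Lp 𝕜 2 (μ.prod ν) →L[𝕜] Lp 𝕜 2 ν →L[𝕜] Lp 𝕜 2 μ :=
  LinearMap.mkContinuous₂
    (LinearMap.mk₂ 𝕜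
      (fun K f ↦ (memLp_integral_kernel_mul ENNReal.ofNat_ne_top (Lp.memLp K) (Lp.memLp f)).toLp)
      (fun K L f ↦ by
        rw [← MemLp.toLp_add, MemLp.toLp_eq_toLp_iff]
        filter_upwards [integral_kernel_mul_congr (Lp.coeFn_add K L) (ae_eq_refl f),
          ae_integrable_kernel_mul ENNReal.ofNat_ne_top (Lp.memLp K) (Lp.memLp f),
          ae_integrable_kernel_mul ENNReal.ofNat_ne_top (Lp.memLp L) (Lp.memLp f)] with x hx hK hL
        simp only [hx, Pi.add_apply, add_mul, integral_add hK hL])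
      (fun c K f ↦ by
        rw [← MemLp.toLp_const_smul, MemLp.toLp_eq_toLp_iff]
        filter_upwards [integral_kernel_mul_congr (Lp.coeFn_smul c K) (ae_eq_refl f)] with x hx
        simp only [hx, Pi.smul_apply, smul_mul_assoc, integral_smul])
      (fun K f g ↦ by
        rw [← MemLp.toLp_add, MemLp.toLp_eq_toLp_iff]
        filter_upwards [integral_kernel_mul_congr (ae_eq_refl K) (Lp.coeFn_add f g),
          ae_integrable_kernel_mul ENNReal.ofNat_ne_top (Lp.memLp K) (Lp.memLp f),
          ae_integrable_kernel_mul ENNReal.ofNat_ne_top (Lp.memLp K) (Lp.memLp g)] with x hx hf hg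
        simp only [hx, Pi.add_apply, mul_add, integral_add hf hg])
      (fun c K f ↦ by
        rw [← MemLp.toLp_const_smul, MemLp.toLp_eq_toLp_iff]
        filter_upwards [integral_kernel_mul_congr (ae_eq_refl K) (Lp.coeFn_smul c f)] with x hx
        simp only [hx, Pi.smul_apply, mul_smul_comm, integral_smul]))
    1 (fun K f ↦ by
      rw [LinearMap.mk₂_apply, Lp.norm_toLp, one_mul, mul_comm, Lp.norm_def, Lp.norm_def,
        ← ENNReal.toReal_mul]
      exact ENNReal.toReal_mono (ENNReal.mul_ne_top (Lp.memLp f).2.ne (Lp.memLp K).2.ne)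
        (eLpNorm_integral_kernel_mul_le ENNReal.ofNat_ne_top (Lp.memLp K).1 (Lp.memLp f)))

theorem coeFn_kernelOperator (K : Lp 𝕜 2 (μ.prod ν)) (f : Lp 𝕜 2 ν) :
    kernelOperator K f =ᵐ[μ] fun x ↦ ∫ y, K (x, y) * f y ∂ν :=
  MemLp.coeFn_toLp (memLp_integral_kernel_mul ENNReal.ofNat_ne_top (Lp.memLp K) (Lp.memLp f))

theorem coeFn_kernelOperator_toLp {K : α × β → 𝕜} (hK : MemLp K 2 (μ.prod ν)) (f : Lp 𝕜 2 ν) :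
    kernelOperator (hK.toLp K) f =ᵐ[μ] fun x ↦ ∫ y, K (x, y) * f y ∂ν :=
  (coeFn_kernelOperator _ f).trans (integral_kernel_mul_congr hK.coeFn_toLp (ae_eq_refl f))

theorem kernelOperator_mul_star_eq_rankOne (g : Lp 𝕜 2 μ) (f : Lp 𝕜 2 ν) :
    kernelOperator (memLp_mul_star_prod g f).toLp = InnerProductSpace.rankOne 𝕜 g f := by
  ext1 h
  refine Lp.ext ((coeFn_kernelOperator_toLp _ h).trans ?_)
  rw [InnerProductSpace.rankOne_apply, L2.inner_def]
  filter_upwards [Lp.coeFn_smul (∫ y, inner 𝕜 (f y) (h y) ∂ν) g] with x hx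
  rw [hx, Pi.smul_apply, smul_eq_mul, mul_comm, ← integral_const_mul]
  simp only [RCLike.inner_apply', mul_assoc]

theorem inner_mul_star_prod_eq_inner_kernelOperator (K : Lp 𝕜 2 (μ.prod ν)) (g : Lp 𝕜 2 μ)
    (f : Lp 𝕜 2 ν) :
    inner 𝕜 (memLp_mul_star_prod g f).toLp K = inner 𝕜 g (kernelOperator K f) := by
  have hinner : (fun z ↦ inner 𝕜 ((memLp_mul_star_prod g f).toLp _ z) (K z)) =ᵐ[μ.prod ν]
      fun z ↦ starRingEnd 𝕜 (g z.1) * (K z * f z.2) := by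
    filter_upwards [(memLp_mul_star_prod g f).coeFn_toLp] with z hz
    simp only [hz, RCLike.inner_apply', map_mul, RCLike.conj_conj]
    ring
  rw [L2.inner_def, L2.inner_def, integral_congr_ae hinner,
    integral_prod _ ((L2.integrable_inner _ _).congr hinner)]
  refine integral_congr_ae ?_
  filter_upwards [coeFn_kernelOperator K f] with x hx
  rw [hx, RCLike.inner_apply', integral_const_mul]

theorem isCompactOperator_kernelOperator (K : Lp 𝕜 2 (μ.prod ν)) :
    IsCompactOperator (kernelOperator K : Lp 𝕜 2 ν → Lp 𝕜 2 μ) := by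
  let V : Submodule 𝕜 (Lp 𝕜 2 (μ.prod ν)) :=
    (compactOperator (RingHom.id 𝕜) (Lp 𝕜 2 ν) (Lp 𝕜 2 μ)).comap kernelOperator.toLinearMap
  have hV : IsClosed (V : Set (Lp 𝕜 2 (μ.prod ν))) :=
    (isClosed_setOfPred_isCompactOperator (σ₁₂ := RingHom.id 𝕜)).preimage
      kernelOperator.continuous
  have : CompleteSpace V := hV.completeSpace_coe
  -- `V` contains all kernels of rank one, and a kernel orthogonal to these has operator zero.
  have hV' : Vᗮ = ⊥ := by
    refine (Submodule.eq_bot_iff _).mpr fun L hL ↦ ?_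
    have hrank (g : Lp 𝕜 2 μ) (f : Lp 𝕜 2 ν) : (memLp_mul_star_prod g f).toLp ∈ V := by
      change IsCompactOperator (kernelOperator (memLp_mul_star_prod g f).toLp)
      rw [kernelOperator_mul_star_eq_rankOne]
      exact isCompactOperator_rankOne g f
    have hzero : kernelOperator L = 0 := by
      ext1 f
      refine ext_inner_left 𝕜 fun g ↦ ?_
      rw [← inner_mul_star_prod_eq_inner_kernelOperator, hL _ (hrank g f)]
      simp
    have hLV : L ∈ V := by
      change IsCompactOperator (kernelOperator L)
      rw [hzero]
      exact isCompactOperator_zero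
    exact inner_self_eq_zero.mp (hL L hLV)
  have hK : K ∈ V := (Submodule.orthogonal_eq_bot_iff.mp hV') ▸ Submodule.mem_top
  exact hK

end HilbertSchmidt

end Kernel

section Domination

open scoped ComplexOrder

variable {α : Type*} [MeasurableSpace α] {μ : Measure α} {p : ℝ≥0∞} [Fact (1 ≤ p)]

/-- `T` dominates `S` on `L^p`: `|f| ≤ g` almost everywhere implies `|S f| ≤ T g` almost everywhere.
The inequalities are in the order of `ℂ`, so that they force `g` and `T g` to be real. -/
def DominatedBy (S T : Lp ℂ p μ →L[ℂ] Lp ℂ p μ) : Prop :=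
  ∀ f g : Lp ℂ p μ, (∀ᵐ x ∂μ, (‖f x‖ : ℂ) ≤ g x) → ∀ᵐ x ∂μ, (‖S f x‖ : ℂ) ≤ T g x

variable {S T : Lp ℂ p μ →L[ℂ] Lp ℂ p μ}

theorem DominatedBy.pow (h : DominatedBy S T) (n : ℕ) : DominatedBy (S ^ n) (T ^ n) := by
  induction n with
  | zero => exact fun f g hfg ↦ hfg
  | succ n ih =>
    rw [pow_succ', pow_succ']
    exact fun f g hfg ↦ h _ _ (ih f g hfg)

theorem DominatedBy.norm_le (h : DominatedBy S T) : ‖S‖ ≤ ‖T‖ := by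
  refine S.opNorm_le_bound (norm_nonneg T) fun f ↦ ?_
  let absf : Lp ℂ p μ := (Lp.memLp f).norm.ofReal.toLp
  have habs : absf =ᵐ[μ] fun x ↦ ((‖f x‖ : ℝ) : ℂ) := (Lp.memLp f).norm.ofReal.coeFn_toLp
  calc ‖S f‖ ≤ ‖T absf‖ := by
        refine Lp.norm_le_norm_of_ae_le ?_
        filter_upwards [h f absf (habs.mono fun x hx ↦ hx.ge)] with x hx
        exact (by simpa using (Complex.le_def.mp hx).1 : ‖S f x‖ ≤ (T absf x).re).trans
          (Complex.re_le_norm _)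
    _ ≤ ‖T‖ * ‖absf‖ := T.le_opNorm absf
    _ ≤ ‖T‖ * ‖f‖ := by
        gcongr
        refine Lp.norm_le_norm_of_ae_le (habs.mono fun x hx ↦ ?_)
        simp [hx]

theorem DominatedBy.spectralRadius_le (h : DominatedBy S T) :
    spectralRadius ℂ S ≤ spectralRadius ℂ T :=
  spectralRadius_le_of_norm_pow_le fun n ↦ (h.pow n).norm_le

theorem dominatedBy_kernelOperator [SFinite μ] {K L : Lp ℂ 2 (μ.prod μ)}
    (h : ∀ᵐ z ∂μ.prod μ, (‖K z‖ : ℂ) ≤ L z) :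
    DominatedBy (kernelOperator K) (kernelOperator L) := by
  intro f g hfg
  filter_upwards [coeFn_kernelOperator K f, coeFn_kernelOperator L g,
    ae_integrable_kernel_mul ENNReal.ofNat_ne_top (Lp.memLp K) (Lp.memLp f),
    ae_integrable_kernel_mul ENNReal.ofNat_ne_top (Lp.memLp L) (Lp.memLp g),
    Measure.ae_ae_of_ae_prod h] with x hKf hLg hKint hLint hx
  rw [hKf, hLg]
  calc ((‖∫ y, K (x, y) * f y ∂μ‖ : ℝ) : ℂ) ≤ ((∫ y, ‖K (x, y) * f y‖ ∂μ : ℝ) : ℂ) :=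
        Complex.real_le_real.mpr (norm_integral_le_integral_norm _)
    _ = ∫ y, ((‖K (x, y) * f y‖ : ℝ) : ℂ) ∂μ := integral_complex_ofReal.symm
    _ ≤ ∫ y, L (x, y) * g y ∂μ := by
        refine integral_mono_ae hKint.norm.ofReal hLint ?_
        filter_upwards [hx, hfg] with y hKL hfgy
        rw [norm_mul, Complex.ofReal_mul]
        exact mul_le_mul hKL hfgy (by positivity) (le_trans (by positivity) hKL)

end Domination

section Indicator

variable {α : Type*} [MeasurableSpace α] {μ : Measure α}

theorem tendsto_toLp_indicator {E : Type*} [NormedAddCommGroup E] {p : ℝ≥0∞} [Fact (1 ≤ p)]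
    (hp : p ≠ ∞) {f : α → E} (hf : MemLp f p μ) {ι : Type*} {l : Filter ι} {t : ι → Set α}
    {s : Set α} (ht : ∀ i, MeasurableSet (t i)) (hs : MeasurableSet s)
    (h : Tendsto (fun i ↦ μ (symmDiff (t i) s)) l (𝓝 0)) :
    Tendsto (fun i ↦ (hf.indicator (ht i)).toLp) l (𝓝 (hf.indicator hs).toLp) := by
  rw [Lp.tendsto_Lp_iff_tendsto_eLpNorm'', ENNReal.tendsto_nhds_zero]
  intro ε hε
  obtain ⟨r, hr, hrε⟩ := ENNReal.lt_iff_exists_nnreal_btwn.mp hε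
  obtain ⟨δ, hδ, hδr⟩ :=
    hf.eLpNorm_indicator_le Fact.out hp (NNReal.coe_pos.mpr (ENNReal.coe_pos.mp hr))
  filter_upwards [h.eventually_le_const (ENNReal.ofReal_pos.mpr hδ)] with i hi
  rw [eLpNorm_indicator_sub_indicator]
  exact (hδr _ ((ht i).symmDiff hs) hi).trans (by simpa using hrε.le)

theorem tendsto_measure_symmDiff_iInter [IsFiniteMeasure μ] {s : ℕ → Set α} (hs : Antitone s)
    (hmeas : ∀ n, MeasurableSet (s n)) :
    Tendsto (fun n ↦ μ (symmDiff (s n) (⋂ m, s m))) atTop (𝓝 0) := by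
  have hdiff (n : ℕ) : symmDiff (s n) (⋂ m, s m) = s n \ ⋂ m, s m :=
    symmDiff_of_ge (iInter_subset s n)
  have hempty : ⋂ n, s n ∩ (⋂ m, s m)ᶜ = ∅ := by
    rw [← iInter_inter, inter_compl_self]
  simp only [hdiff, sdiff_eq]
  rw [← measure_empty (μ := μ), ← hempty]
  exact tendsto_measure_iInter_atTop
    (fun n ↦ ((hmeas n).inter (MeasurableSet.iInter hmeas).compl).nullMeasurableSet)
    (fun m n hmn ↦ inter_subset_inter_left _ (hs hmn)) ⟨0, measure_ne_top μ _⟩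

end Indicator

section Operator

variable {μ : Measure Ω} {Γ Γ' : Ω → Ω → ℝ}

theorem memLp_ofReal_comp_swap [SFinite μ] {p : ℝ≥0∞}
    (hΓ : MemLp (Function.uncurry Γ) p (μ.prod μ)) :
    MemLp (fun z : Ω × Ω ↦ (Γ z.2 z.1 : ℂ)) p (μ.prod μ) :=
  (hΓ.comp_measurePreserving Measure.measurePreserving_swap).ofReal

/-- The operator `T_Γ` on `L²(μ)`. As `T_Γ` integrates over the first variable of `Γ` and
`kernelOperator` over the second one, the kernel is the transpose of `Γ`. -/
noncomputable def integralOperator [SFinite μ] (hΓ : MemLp (Function.uncurry Γ) 2 (μ.prod μ)) :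
    Lp ℂ 2 μ →L[ℂ] Lp ℂ 2 μ :=
  kernelOperator (memLp_ofReal_comp_swap hΓ).toLp

variable [SFinite μ]

theorem coeFn_integralOperator (hΓ : MemLp (Function.uncurry Γ) 2 (μ.prod μ)) (f : Lp ℂ 2 μ) :
    integralOperator hΓ f =ᵐ[μ] fun x ↦ ∫ y, f y * (Γ y x : ℂ) ∂μ := by
  simpa only [mul_comm, integralOperator] using
    coeFn_kernelOperator_toLp (memLp_ofReal_comp_swap hΓ) f

theorem isCompactOperator_integralOperator (hΓ : MemLp (Function.uncurry Γ) 2 (μ.prod μ)) :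
    IsCompactOperator (integralOperator hΓ) :=
  isCompactOperator_kernelOperator _

theorem isEigenvalue_iff_hasEigenvalue (hΓ : MemLp (Function.uncurry Γ) 2 (μ.prod μ)) {τ : ℂ} :
    IsEigenvalue μ Γ τ ↔
      Module.End.HasEigenvalue (integralOperator hΓ : Module.End ℂ (Lp ℂ 2 μ)) τ := by
  have key (f : Lp ℂ 2 μ) : integralOperator hΓ f = τ • f ↔
      ∀ᵐ x ∂μ, ∫ y, f y * (Γ y x : ℂ) ∂μ = τ * f x := by
    rw [Lp.ext_iff]
    constructor <;> intro h <;>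
      filter_upwards [h, coeFn_integralOperator hΓ f, Lp.coeFn_smul τ f] with x hx hTf hτf
    · rw [← hTf, hx, hτf, Pi.smul_apply, smul_eq_mul]
    · rw [hTf, hx, hτf, Pi.smul_apply, smul_eq_mul]
  constructor
  · rintro ⟨f, hf, hf0, hfτ⟩
    refine Module.End.hasEigenvalue_of_hasEigenvector (x := hf.toLp) ⟨?_, ?_⟩
    · refine Module.End.mem_eigenspace_iff.mpr ((key _).mpr ?_)
      filter_upwards [hfτ, hf.coeFn_toLp] with x hx hfx
      rw [hfx, ← hx]
      refine integral_congr_ae ?_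
      filter_upwards [hf.coeFn_toLp] with y hy using by rw [hy]
    · exact fun h ↦ hf0 ((MemLp.toLp_eq_toLp_iff hf MemLp.zero').mp h)
  · intro h
    obtain ⟨f, hf, hf0⟩ := h.exists_hasEigenvector
    exact ⟨f, Lp.memLp f, fun h ↦ hf0 (Lp.eq_zero_iff_ae_eq_zero.mpr h),
      (key f).mp (Module.End.mem_eigenspace_iff.mp hf)⟩

theorem isGreatest_toReal_spectralRadius (hΓ : MemLp (Function.uncurry Γ) 2 (μ.prod μ)) :
    IsGreatest (insert 0 {r | ∃ τ, IsEigenvalue μ Γ τ ∧ ‖τ‖ = r})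
      (spectralRadius ℂ (integralOperator hΓ)).toReal := by
  simpa only [isEigenvalue_iff_hasEigenvalue hΓ] using
    isGreatest_norm_eigenvalues_spectralRadius (isCompactOperator_integralOperator hΓ)

theorem specRad_eq_toReal_spectralRadius (hΓ : MemLp (Function.uncurry Γ) 2 (μ.prod μ)) :
    specRad μ Γ = (spectralRadius ℂ (integralOperator hΓ)).toReal :=
  (isGreatest_toReal_spectralRadius hΓ).csSup_eq

theorem specRad_nonneg (μ : Measure Ω) (Γ : Ω → Ω → ℝ) : 0 ≤ specRad μ Γ :=
  Real.sSup_nonneg (by rintro r (rfl | ⟨τ, -, rfl⟩) <;> positivity)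

theorem IsEigenvalue.norm_le_specRad (hΓ : MemLp (Function.uncurry Γ) 2 (μ.prod μ)) {τ : ℂ}
    (hτ : IsEigenvalue μ Γ τ) : ‖τ‖ ≤ specRad μ Γ := by
  rw [specRad_eq_toReal_spectralRadius hΓ]
  exact (isGreatest_toReal_spectralRadius hΓ).2 (.inr ⟨τ, hτ, rfl⟩)

theorem specRad_mono (hΓ : MemLp (Function.uncurry Γ) 2 (μ.prod μ))
    (hΓ' : MemLp (Function.uncurry Γ') 2 (μ.prod μ))
    (hle : ∀ᵐ z ∂μ.prod μ, |Function.uncurry Γ z| ≤ Function.uncurry Γ' z) :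
    specRad μ Γ ≤ specRad μ Γ' := by
  rw [specRad_eq_toReal_spectralRadius hΓ, specRad_eq_toReal_spectralRadius hΓ']
  refine ENNReal.toReal_mono (spectralRadius_ne_top _)
    (dominatedBy_kernelOperator ?_).spectralRadius_le
  filter_upwards [(memLp_ofReal_comp_swap hΓ).coeFn_toLp, (memLp_ofReal_comp_swap hΓ').coeFn_toLp,
    Measure.measurePreserving_swap.quasiMeasurePreserving.ae hle] with z hz hz' hlez
  rw [hz, hz', Complex.norm_real]
  exact Complex.real_le_real.mpr hlez

end Operator

section Restrict

variable {μ : Measure Ω} {Γ : Ω → Ω → ℝ} {A B : Set Ω}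

theorem kerRestrict_univ {S : Type*} (Γ : S → S → ℝ) : kerRestrict Γ univ = Γ := by
  ext x y
  simp [kerRestrict]

theorem kerRestrict_kerRestrict {S : Type*} (Γ : S → S → ℝ) (A B : Set S) :
    kerRestrict (kerRestrict Γ A) B = kerRestrict Γ (A ∩ B) := by
  ext x y
  change (B ×ˢ B).indicator ((A ×ˢ A).indicator (Function.uncurry Γ)) (x, y) = _
  rw [indicator_indicator, prod_inter_prod, inter_comm, kerRestrict]

theorem memLp_kerRestrict {p : ℝ≥0∞} (hΓ : MemLp (Function.uncurry Γ) p (μ.prod μ))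
    (hA : MeasurableSet A) : MemLp (Function.uncurry (kerRestrict Γ A)) p (μ.prod μ) :=
  hΓ.indicator (hA.prod hA)

theorem specRad_kerRestrict_mono [SFinite μ] (hΓ : MemLp (Function.uncurry Γ) 2 (μ.prod μ))
    (hΓ0 : 0 ≤ᵐ[μ.prod μ] Function.uncurry Γ) (hA : MeasurableSet A) (hB : MeasurableSet B)
    (hAB : A ≤ᵐ[μ] B) : specRad μ (kerRestrict Γ A) ≤ specRad μ (kerRestrict Γ B) := by
  refine specRad_mono (memLp_kerRestrict hΓ hA) (memLp_kerRestrict hΓ hB) ?_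
  filter_upwards [hΓ0, Measure.quasiMeasurePreserving_fst.ae hAB,
    Measure.quasiMeasurePreserving_snd.ae hAB] with z hz h₁ h₂
  have hz' : z ∈ A ×ˢ A → z ∈ B ×ˢ B := fun hzA ↦ ⟨h₁ hzA.1, h₂ hzA.2⟩
  change |(A ×ˢ A).indicator _ z| ≤ (B ×ˢ B).indicator _ z
  by_cases hzA : z ∈ A ×ˢ A
  · rw [indicator_of_mem hzA, indicator_of_mem (hz' hzA), abs_of_nonneg hz]
  · rw [indicator_of_notMem hzA, abs_zero]
    exact indicator_apply_nonneg fun _ ↦ hz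

theorem integralOperator_kerRestrict [SFinite μ] (hΓ : MemLp (Function.uncurry Γ) 2 (μ.prod μ))
    (hA : MeasurableSet A) :
    integralOperator (memLp_kerRestrict hΓ hA) =
      kernelOperator ((memLp_ofReal_comp_swap hΓ).indicator (hA.prod hA)).toLp := by
  rw [integralOperator, MemLp.toLp_congr]
  refine ae_of_all _ fun z ↦ ?_
  by_cases h₁ : z.1 ∈ A <;> by_cases h₂ : z.2 ∈ A <;> simp [kerRestrict, h₁, h₂]

theorem tendsto_integralOperator_kerRestrict_iInter [IsFiniteMeasure μ]
    (hΓ : MemLp (Function.uncurry Γ) 2 (μ.prod μ)) {C : ℕ → Set Ω} (hC : Antitone C)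
    (hCmeas : ∀ n, MeasurableSet (C n)) :
    Tendsto (fun n ↦ integralOperator (memLp_kerRestrict hΓ (hCmeas n))) atTop
      (𝓝 (integralOperator (memLp_kerRestrict hΓ (MeasurableSet.iInter hCmeas)))) := by
  simp only [integralOperator_kerRestrict hΓ (hCmeas _),
    integralOperator_kerRestrict hΓ (MeasurableSet.iInter hCmeas)]
  refine (kernelOperator.continuous.tendsto _).comp (tendsto_toLp_indicator ENNReal.ofNat_ne_top
    (memLp_ofReal_comp_swap hΓ) (fun n ↦ (hCmeas n).prod (hCmeas n))
    ((MeasurableSet.iInter hCmeas).prod (MeasurableSet.iInter hCmeas)) ?_)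
  have hprod : (⋂ n, C n) ×ˢ (⋂ n, C n) = ⋂ n, C n ×ˢ C n := by
    ext z
    simp [forall_and]
  rw [hprod]
  exact tendsto_measure_symmDiff_iInter (fun m n hmn ↦ prod_mono (hC hmn) (hC hmn))
    fun n ↦ (hCmeas n).prod (hCmeas n)

theorem le_specRad_kerRestrict_iInter [IsFiniteMeasure μ]
    (hΓ : MemLp (Function.uncurry Γ) 2 (μ.prod μ)) {C : ℕ → Set Ω} (hC : Antitone C)
    (hCmeas : ∀ n, MeasurableSet (C n)) {r : ℝ} (hr : ∀ n, r ≤ specRad μ (kerRestrict Γ (C n))) :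
    r ≤ specRad μ (kerRestrict Γ (⋂ n, C n)) := by
  have hclosed := upperSemicontinuous_spectralRadius (𝕜 := ℂ) (A := Lp ℂ 2 μ →L[ℂ] Lp ℂ 2 μ)
    |>.isClosed_preimage (ENNReal.ofReal r)
  have hmem : ENNReal.ofReal r ≤
      spectralRadius ℂ (integralOperator (memLp_kerRestrict hΓ (MeasurableSet.iInter hCmeas))) := by
    refine hclosed.mem_of_tendsto (tendsto_integralOperator_kerRestrict_iInter hΓ hC hCmeas)
      (.of_forall fun n ↦ ?_)
    rw [mem_preimage, mem_Ici, ENNReal.ofReal_le_iff_le_toReal (spectralRadius_ne_top _),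
      ← specRad_eq_toReal_spectralRadius]
    exact hr n
  rwa [specRad_eq_toReal_spectralRadius (memLp_kerRestrict hΓ (MeasurableSet.iInter hCmeas)),
    ← ENNReal.ofReal_le_iff_le_toReal (spectralRadius_ne_top _)]

end Restrict

section BlockTriangular

variable {μ : Measure Ω} {Γ : Ω → Ω → ℝ} {A B : Set Ω}

theorem isEigenvalue_kerRestrict_of_indicator {τ : ℂ} {f : Ω → ℂ} (hA : MeasurableSet A)
    (hf : MemLp f 2 μ) (hf0 : ¬ A.indicator f =ᵐ[μ] 0)
    (hfτ : ∀ᵐ x ∂μ, x ∈ A → ∫ y in A, f y * (Γ y x : ℂ) ∂μ = τ * f x) :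
    IsEigenvalue μ (kerRestrict Γ A) τ := by
  refine ⟨A.indicator f, hf.indicator hA, hf0, ?_⟩
  filter_upwards [hfτ] with x hx
  by_cases hxA : x ∈ A
  · rw [indicator_of_mem hxA, ← hx hxA, ← integral_indicator hA]
    congr 1 with y
    by_cases hyA : y ∈ A <;> simp [kerRestrict, hxA, hyA]
  · simp [kerRestrict, hxA]

variable [SFinite μ]

theorem IsEigenvalue.kerRestrict_or_compl {τ : ℂ} (hB : MeasurableSet B)
    (hΓB : ∀ᵐ z ∂μ.prod μ, z.1 ∉ B → z.2 ∈ B → Γ z.1 z.2 = 0) (hτ : IsEigenvalue μ Γ τ) :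
    IsEigenvalue μ (kerRestrict Γ B) τ ∨ IsEigenvalue μ (kerRestrict Γ Bᶜ) τ := by
  obtain ⟨f, hf, hf0, hfτ⟩ := hτ
  by_cases hfB : B.indicator f =ᵐ[μ] 0
  · have hfBc : Bᶜ.indicator f =ᵐ[μ] f := by
      filter_upwards [hfB] with x hx
      by_cases hxB : x ∈ B <;> simp_all
    refine .inr (isEigenvalue_kerRestrict_of_indicator hB.compl hf
      (fun h ↦ hf0 (hfBc.symm.trans h)) ?_)
    filter_upwards [hfτ] with x hx _
    rw [← hx]
    refine setIntegral_eq_integral_of_ae_compl_eq_zero ?_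
    filter_upwards [hfB] with y hy hyB
    simp_all
  · refine .inl (isEigenvalue_kerRestrict_of_indicator hB hf hfB ?_)
    have hswap := Measure.ae_ae_of_ae_prod
      (Measure.measurePreserving_swap.quasiMeasurePreserving.ae hΓB)
    filter_upwards [hfτ, hswap] with x hx hΓx hxB
    rw [← hx]
    refine setIntegral_eq_integral_of_ae_compl_eq_zero ?_
    filter_upwards [hΓx] with y hΓyx hyB
    simp [show Γ y x = 0 from hΓyx hyB hxB]

theorem specRad_le_max_specRad_kerRestrict_compl (hΓ : MemLp (Function.uncurry Γ) 2 (μ.prod μ))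
    (hB : MeasurableSet B) (hΓB : ∀ᵐ z ∂μ.prod μ, z.1 ∉ B → z.2 ∈ B → Γ z.1 z.2 = 0) :
    specRad μ Γ ≤ max (specRad μ (kerRestrict Γ B)) (specRad μ (kerRestrict Γ Bᶜ)) := by
  refine csSup_le (insert_nonempty _ _) ?_
  rintro r (rfl | ⟨τ, hτ, rfl⟩)
  · exact le_max_of_le_left (specRad_nonneg _ _)
  · exact (hτ.kerRestrict_or_compl hB hΓB).elim
      (fun h ↦ le_max_of_le_left (h.norm_le_specRad (memLp_kerRestrict hΓ hB)))
      (fun h ↦ le_max_of_le_right (h.norm_le_specRad (memLp_kerRestrict hΓ hB.compl)))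

theorem specRad_kerRestrict_union_le_max (hΓ : MemLp (Function.uncurry Γ) 2 (μ.prod μ))
    (hA : MeasurableSet A) (hB : MeasurableSet B) (hAB : Disjoint A B)
    (hΓAB : ∀ᵐ z ∂μ.prod μ, z ∈ A ×ˢ B → Function.uncurry Γ z = 0) :
    specRad μ (kerRestrict Γ (A ∪ B)) ≤
      max (specRad μ (kerRestrict Γ A)) (specRad μ (kerRestrict Γ B)) := by
  have hvanish : ∀ᵐ z ∂μ.prod μ, z.1 ∉ B → z.2 ∈ B → kerRestrict Γ (A ∪ B) z.1 z.2 = 0 := by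
    filter_upwards [hΓAB] with z hz hz₁ hz₂
    by_cases hzA : z.1 ∈ A
    · simpa [kerRestrict, hzA, hz₂] using hz ⟨hzA, hz₂⟩
    · simp [kerRestrict, hzA, hz₁]
  have h := specRad_le_max_specRad_kerRestrict_compl (memLp_kerRestrict hΓ (hA.union hB)) hB hvanish
  rwa [kerRestrict_kerRestrict, kerRestrict_kerRestrict, union_inter_cancel_right, ← sdiff_eq,
    union_sdiff_right, hAB.sdiff_eq_left, max_comm] at h

theorem ae_eq_zero_of_setIntegral_setIntegral_nonpos (hΓ0 : 0 ≤ᵐ[μ.prod μ] Function.uncurry Γ)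
    (hA : MeasurableSet A) (hB : MeasurableSet B)
    (hΓ : IntegrableOn (Function.uncurry Γ) (A ×ˢ B) (μ.prod μ))
    (h : ∫ x in A, ∫ y in B, Γ x y ∂μ ∂μ ≤ 0) :
    ∀ᵐ z ∂μ.prod μ, z ∈ A ×ˢ B → Function.uncurry Γ z = 0 := by
  have hnonneg := ae_restrict_of_ae (s := A ×ˢ B) hΓ0
  have hzero : ∫ z in A ×ˢ B, Function.uncurry Γ z ∂μ.prod μ = 0 := by
    refine le_antisymm ?_ (integral_nonneg_of_ae hnonneg)
    rwa [setIntegral_prod _ hΓ]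
  exact (ae_restrict_iff' (hA.prod hB)).mp
    ((setIntegral_eq_zero_iff_of_nonneg_ae hnonneg hΓ).mp hzero)

end BlockTriangular

section MinimalSet

variable {α : Type*} [MeasurableSpace α] (μ : Measure α) [IsFiniteMeasure μ] {P : Set α → Prop}

theorem exists_subset_forall_measure_le_add {C : Set α} (hC : P C) {ε : ℝ≥0∞} (hε : ε ≠ 0) :
    ∃ D ⊆ C, P D ∧ ∀ E ⊆ C, P E → μ D ≤ μ E + ε := by
  let m : ℝ≥0∞ := ⨅ E ∈ {E | E ⊆ C ∧ P E}, μ E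
  have hm (E : Set α) (hEC : E ⊆ C) (hE : P E) : m ≤ μ E := iInf₂_le E ⟨hEC, hE⟩
  have hm_top : m ≠ ∞ := ((hm C subset_rfl hC).trans_lt (measure_lt_top μ C)).ne
  obtain ⟨D, ⟨hDC, hD⟩, hDm⟩ := by simpa only [iInf_lt_iff, exists_prop] using
    (ENNReal.lt_add_right hm_top hε : (⨅ E ∈ {E | E ⊆ C ∧ P E}, μ E) < m + ε)
  exact ⟨D, hDC, hD, fun E hEC hE ↦ hDm.le.trans (add_le_add_left (hm E hEC hE) ε)⟩

theorem exists_antitone_forall_measure_le_add_inv (hP : ∃ C, P C) :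
    ∃ C : ℕ → Set α, Antitone C ∧ (∀ n, P (C n)) ∧
      ∀ n, ∀ E ⊆ C n, P E → μ (C (n + 1)) ≤ μ E + (n : ℝ≥0∞)⁻¹ := by
  obtain ⟨A, hA⟩ := hP
  choose next hsub hnext hle using fun (n : ℕ) (C : {C : Set α // P C}) ↦
    exists_subset_forall_measure_le_add μ C.2 (ENNReal.inv_ne_zero.mpr (ENNReal.natCast_ne_top n))
  let C : ℕ → {C : Set α // P C} := fun n ↦ n.rec ⟨A, hA⟩ fun n C ↦ ⟨next n C, hnext n C⟩
  exact ⟨fun n ↦ (C n).1, antitone_nat_of_succ_le fun n ↦ hsub n (C n), fun n ↦ (C n).2,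
    fun n ↦ hle n (C n)⟩

theorem exists_forall_subset_measure_sdiff_eq_zero (hPmeas : ∀ C, P C → MeasurableSet C)
    (hPinter : ∀ C : ℕ → Set α, Antitone C → (∀ n, P (C n)) → P (⋂ n, C n)) (hP : ∃ C, P C) :
    ∃ C, P C ∧ ∀ D ⊆ C, P D → μ (C \ D) = 0 := by
  obtain ⟨C, hC, hPC, hle⟩ := exists_antitone_forall_measure_le_add_inv μ hP
  refine ⟨⋂ n, C n, hPinter C hC hPC, fun D hD hPD ↦ ?_⟩
  have hCD : μ (⋂ n, C n) ≤ μ D := by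
    have htendsto : Tendsto (fun n : ℕ ↦ μ D + (n : ℝ≥0∞)⁻¹) atTop (𝓝 (μ D)) := by
      simpa using tendsto_const_nhds.add ENNReal.tendsto_inv_nat_nhds_zero
    refine ge_of_tendsto' htendsto fun n ↦ (measure_mono (iInter_subset C (n + 1))).trans ?_
    exact hle n D (hD.trans (iInter_subset C n)) hPD
  rw [measure_sdiff hD (hPmeas D hPD).nullMeasurableSet (measure_ne_top μ D)]
  exact tsub_eq_zero_of_le hCD

end MinimalSet

section SpectrallyCritical

variable {μ : Measure Ω} {Γ : Ω → Ω → ℝ} {C : Set Ω}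

/-- `C` is a smallest set, up to null sets, with the spectral radius that `Γ⟦C⟧` has: no subset of
`C` whose complement in `C` is not null keeps this spectral radius. -/
def SpectrallyCritical (μ : Measure Ω) (Γ : Ω → Ω → ℝ) (C : Set Ω) : Prop :=
  MeasurableSet C ∧ ∀ D ⊆ C, MeasurableSet D →
    specRad μ (kerRestrict Γ C) ≤ specRad μ (kerRestrict Γ D) → μ (C \ D) = 0

theorem specRad_kerRestrict_empty (μ : Measure Ω) (Γ : Ω → Ω → ℝ) :
    specRad μ (kerRestrict Γ ∅) = 0 := by
  refine le_antisymm (csSup_le (insert_nonempty _ _) ?_) (specRad_nonneg _ _)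
  rintro r (rfl | ⟨τ, ⟨f, -, hf0, hfτ⟩, rfl⟩)
  · exact le_rfl
  · by_contra hτ
    refine hf0 (hfτ.mono fun x hx ↦ ?_)
    simpa [kerRestrict, show τ ≠ 0 by simpa using hτ] using hx

theorem specRad_kerRestrict_le [SFinite μ] (hΓ : MemLp (Function.uncurry Γ) 2 (μ.prod μ))
    (hΓ0 : 0 ≤ᵐ[μ.prod μ] Function.uncurry Γ) (hC : MeasurableSet C) :
    specRad μ (kerRestrict Γ C) ≤ specRad μ Γ := by
  simpa only [kerRestrict_univ] using
    specRad_kerRestrict_mono hΓ hΓ0 hC .univ (ae_of_all _ fun x _ ↦ mem_univ x)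

theorem SpectrallyCritical.of_subset [SFinite μ] (hΓ : MemLp (Function.uncurry Γ) 2 (μ.prod μ))
    (hΓ0 : 0 ≤ᵐ[μ.prod μ] Function.uncurry Γ) (hC : SpectrallyCritical μ Γ C) {D : Set Ω}
    (hDC : D ⊆ C) (hD : MeasurableSet D) (hCD : C ≤ᵐ[μ] D) : SpectrallyCritical μ Γ D :=
  ⟨hD, fun E hED hE hle ↦ measure_mono_null (sdiff_subset_sdiff_left hDC) <|
    hC.2 E (hED.trans hDC) hE ((specRad_kerRestrict_mono hΓ hΓ0 hC.1 hD hCD).trans hle)⟩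

theorem SpectrallyCritical.stronglyConnectedIn [IsFiniteMeasure μ]
    (hΓ : MemLp (Function.uncurry Γ) 2 (μ.prod μ)) (hΓ0 : 0 ≤ᵐ[μ.prod μ] Function.uncurry Γ)
    (hC : SpectrallyCritical μ Γ C) (hpos : 0 < specRad μ (kerRestrict Γ C)) :
    StronglyConnectedIn μ Γ C := by
  refine ⟨hC.1, pos_iff_ne_zero.mpr fun hC0 ↦ hpos.not_ge ?_, ?_⟩
  · rw [← specRad_kerRestrict_empty μ Γ]
    exact specRad_kerRestrict_mono hΓ hΓ0 hC.1 .empty (ae_le_set.mpr (by simpa using hC0))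
  · rintro A B hA hB rfl hAB hA0 hB0
    by_contra! h
    have hvanish := ae_eq_zero_of_setIntegral_setIntegral_nonpos hΓ0 hA hB
      (hΓ.integrable one_le_two).integrableOn h
    rcases le_max_iff.mp (specRad_kerRestrict_union_le_max hΓ hA hB hAB hvanish) with hle | hle
    · have hB_null := hC.2 A subset_union_left hA hle
      rw [union_sdiff_left, hAB.symm.sdiff_eq_left] at hB_null
      exact hB0.ne' hB_null
    · have hA_null := hC.2 B subset_union_right hB hle
      rw [union_sdiff_right, hAB.sdiff_eq_left] at hA_null
      exact hA0.ne' hA_null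

theorem exists_spectrallyCritical [IsFiniteMeasure μ]
    (hΓ : MemLp (Function.uncurry Γ) 2 (μ.prod μ)) (hΓ0 : 0 ≤ᵐ[μ.prod μ] Function.uncurry Γ) :
    ∃ C, SpectrallyCritical μ Γ C ∧ specRad μ (kerRestrict Γ C) = specRad μ Γ := by
  let P (C : Set Ω) : Prop := MeasurableSet C ∧ specRad μ Γ ≤ specRad μ (kerRestrict Γ C)
  obtain ⟨C, ⟨hC, hρ⟩, hmin⟩ := exists_forall_subset_measure_sdiff_eq_zero (P := P) μ
    (fun C hC ↦ hC.1)
    (fun C hanti hC ↦ ⟨.iInter fun n ↦ (hC n).1,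
      le_specRad_kerRestrict_iInter hΓ hanti (fun n ↦ (hC n).1) fun n ↦ (hC n).2⟩)
    ⟨univ, .univ, by rw [kerRestrict_univ]⟩
  exact ⟨C, ⟨hC, fun D hDC hD hle ↦ hmin D hDC ⟨hD, hρ.trans hle⟩⟩,
    (specRad_kerRestrict_le hΓ hΓ0 hC).antisymm hρ⟩

end SpectrallyCritical

section StrongComponents

variable {μ : Measure Ω} {Γ : Ω → Ω → ℝ}

theorem fragmented_of_measure_eq_zero {X : Set Ω} (hX : μ X = 0) : Fragmented μ Γ X :=
  fun _ hYX _ hY ↦ hY.2.1.ne' (measure_mono_null hYX hX)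

theorem StrongComponent.ae_le {X Y : Set Ω} (hX : StrongComponent μ Γ X)
    (hY : StronglyConnectedIn μ Γ Y) (hXY : μ (X ∩ Y) ≠ 0) : Y ≤ᵐ[μ] X := by
  by_contra h
  rw [ae_le_set, ← ne_eq, ← pos_iff_ne_zero] at h
  exact hX.2 Y hY.1 (pos_iff_ne_zero.mpr hXY) h hY

theorem exists_specRad_kerRestrict_strongComponent_eq [IsFiniteMeasure μ]
    (hΓ : MemLp (Function.uncurry Γ) 2 (μ.prod μ)) (hΓ0 : 0 ≤ᵐ[μ.prod μ] Function.uncurry Γ)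
    (hpos : 0 < specRad μ Γ) {ι : Type*} [Countable ι] {X₀ : Set Ω} {X : ι → Set Ω}
    (hcover : X₀ ∪ ⋃ i, X i = univ) (hX₀ : Fragmented μ Γ X₀)
    (hX : ∀ i, StrongComponent μ Γ (X i)) :
    ∃ i, specRad μ (kerRestrict Γ (X i)) = specRad μ Γ := by
  obtain ⟨C, hC, hρ⟩ := exists_spectrallyCritical hΓ hΓ0
  have hXmeas (i : ι) : MeasurableSet (X i) := (hX i).1.1
  obtain ⟨i, hi⟩ : ∃ i, μ (X i ∩ C) ≠ 0 := by
    by_contra! hnull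
    let Y : Set Ω := C \ ⋃ i, X i
    have hYmeas : MeasurableSet Y := hC.1.diff (.iUnion hXmeas)
    have hCY : C ≤ᵐ[μ] Y := by
      rw [ae_le_set, sdiff_sdiff_right_self, inter_comm, iUnion_inter]
      exact measure_iUnion_null hnull
    have hYX₀ : Y ⊆ X₀ := fun x hx ↦ (hcover.ge (mem_univ x)).resolve_right hx.2
    have hY : SpectrallyCritical μ Γ Y := hC.of_subset hΓ hΓ0 sdiff_subset hYmeas hCY
    refine hX₀ Y hYX₀ hYmeas (hY.stronglyConnectedIn hΓ hΓ0 ?_)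
    exact (hpos.trans_eq hρ.symm).trans_le (specRad_kerRestrict_mono hΓ hΓ0 hC.1 hYmeas hCY)
  have hCX : C ≤ᵐ[μ] X i :=
    (hX i).ae_le (hC.stronglyConnectedIn hΓ hΓ0 (hpos.trans_eq hρ.symm)) hi
  refine ⟨i, (specRad_kerRestrict_le hΓ hΓ0 (hXmeas i)).antisymm ?_⟩
  exact hρ.symm.trans_le (specRad_kerRestrict_mono hΓ hΓ0 hC.1 (hXmeas i) hCX)

theorem specRad_eq_iSup_strong_components_general [IsFiniteMeasure μ]
    (hΓ : MemLp (Function.uncurry Γ) 2 (μ.prod μ)) (hΓ0 : 0 ≤ᵐ[μ.prod μ] Function.uncurry Γ)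
    {ι : Type*} [Countable ι] {X₀ : Set Ω} {X : ι → Set Ω} (hcover : X₀ ∪ ⋃ i, X i = univ)
    (hX₀ : Fragmented μ Γ X₀) (hX : ∀ i, StrongComponent μ Γ (X i)) :
    specRad μ Γ = (⨆ i, specRad μ (kerRestrict Γ (X i))) ∧
      (Nonempty ι → ∃ i, specRad μ (kerRestrict Γ (X i)) = specRad μ Γ) := by
  have hle (i : ι) : specRad μ (kerRestrict Γ (X i)) ≤ specRad μ Γ :=
    specRad_kerRestrict_le hΓ hΓ0 (hX i).1.1
  rcases (specRad_nonneg μ Γ).eq_or_lt with hzero | hpos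
  · have hX_zero (i : ι) : specRad μ (kerRestrict Γ (X i)) = 0 :=
      ((hle i).trans_eq hzero.symm).antisymm (specRad_nonneg _ _)
    simp [hX_zero, ← hzero]
  · obtain ⟨i, hi⟩ :=
      exists_specRad_kerRestrict_strongComponent_eq hΓ hΓ0 hpos hcover hX₀ hX
    have : Nonempty ι := ⟨i⟩
    exact ⟨le_antisymm (hi.symm.trans_le (le_ciSup ⟨_, forall_mem_range.mpr hle⟩ i)) (ciSup_le hle),
      fun _ ↦ ⟨i, hi⟩⟩

theorem IsDigraphon.memLp [IsFiniteMeasure μ] (hΓ : IsDigraphon Γ) (p : ℝ≥0∞) :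
    MemLp (Function.uncurry Γ) p (μ.prod μ) :=
  .of_bound hΓ.1.aestronglyMeasurable 1 <| ae_of_all _ fun z ↦ by
    rw [Function.uncurry, Real.norm_of_nonneg (hΓ.2 z.1 z.2).1]
    exact (hΓ.2 z.1 z.2).2

end StrongComponents

/-- The spectral radius of a digraphon equals the supremum of the spectral
radii of its strong components, and the supremum is attained when there is at least one
strong component. -/
theorem specRad_eq_iSup_strong_components
    {Ω : Type*} [MeasurableSpace Ω] (μ : Measure Ω) [IsProbabilityMeasure μ]
    (Γ : Ω → Ω → ℝ) (hΓ : IsDigraphon Γ)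
    (I : Set ℕ) (hI : 0 ∉ I) (X : ℕ → Set Ω)
    (hXmeas : ∀ i ∈ insert 0 I, MeasurableSet (X i))
    (hXdisj : (insert 0 I).PairwiseDisjoint X)
    (hXcover : (⋃ i ∈ insert 0 I, X i) = Set.univ)
    (hX0 : μ (X 0) = 0 ∨ Fragmented μ Γ (X 0))
    (hXcomp : ∀ i ∈ I, StrongComponent μ Γ (X i)) :
    specRad μ Γ = (⨆ i : I, specRad μ (kerRestrict Γ (X i))) ∧
      (I.Nonempty → ∃ i ∈ I, specRad μ (kerRestrict Γ (X i)) = specRad μ Γ) := by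
  have hcover : X 0 ∪ ⋃ i : I, X i = univ := by rwa [iUnion_coe_set, ← biUnion_insert]
  simpa only [nonempty_coe_sort, Subtype.exists, exists_prop] using
    specRad_eq_iSup_strong_components_general (hΓ.memLp 2) (ae_of_all _ fun z ↦ (hΓ.2 z.1 z.2).1)
      hcover (hX0.elim fragmented_of_measure_eq_zero id) fun i : I ↦ hXcomp i i.2

end Digraphon
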